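/- Let n ∈ ℕ with n ≥ 2, let k ∈ ℕ, let r > 0 be an irrational real number, and let F be a smooth symmetric 2-cotensor field on ℝ^n. For each orthonormal pair (u, v) in ℝ^n let γ(t) = r·cos(t/r)·u + r·sin(t/r)·v denote the corresponding unit-speed great circle on the sphere of radius r, with velocity γ'(t) = −sin(t/r)·u + cos(t/r)·v. Suppose that for every orthonormal pair (u, v) one has ∫₀^π F(γ(t))(γ'(t), γ'(t))·(sin t)^k dt = 0. Then F(x)(V, V) = 0 for every x ∈ ℝ^n with ‖x‖ = r and every V ∈ ℝ^n with ⟨x, V⟩ = 0. -/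

import Mathlib

open Real intervalIntegral
open scoped RealInnerProductSpace

/-!
Restrict the tensor to a great circle and call `f t` its value on the velocity at time `t`. The
hypothesis, applied to every starting point of that circle, says that all the integrals
`∫ t in 0..π, sin t ^ k • f (s + t)` vanish. Differentiating such an identity in `s` moves the
derivative onto the weight at the cost of boundary terms. As `sin ^ (k + 2)` vanishes to second
order at `0` and `π`, and its second derivative is
`(k + 2) (k + 1) sin ^ k - (k + 2) ^ 2 sin ^ (k + 2)`, two derivatives lower `k` by two; for
`k = 0` and `k = 1` only boundary terms are left and give `f (s + π) = (-1) ^ k f s`. So `f` has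
the period `2 π` besides the period `2 π r` of the great circle. When `r` is irrational, `f` is
constant, and the constant is zero because `sin ^ k` has positive integral over `[0, π]`.
-/

section WeightedIntegrals

variable {G : Type*} [NormedAddCommGroup G] [NormedSpace ℝ G]

theorem hasDerivAt_integral_smul_comp_add {g f : ℝ → G} (hg : ∀ x, HasDerivAt g (f x) x)
    (hf : Continuous f) {w : ℝ → ℝ} (hw : Continuous w) (a b s : ℝ) :
    HasDerivAt (fun s ↦ ∫ t in a..b, w t • g (s + t)) (∫ t in a..b, w t • f (s + t)) s := by
  have hg_cont : Continuous g := continuous_iff_continuousAt.2 fun x ↦ (hg x).continuousAt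
  have hcompact : IsCompact (Metric.closedBall s 1 ×ˢ Set.uIcc a b) :=
    (isCompact_closedBall s 1).prod isCompact_uIcc
  obtain ⟨C, hC⟩ := hcompact.exists_bound_of_continuousOn
    (f := fun p : ℝ × ℝ ↦ w p.2 • f (p.1 + p.2)) (by fun_prop)
  refine (hasDerivAt_integral_of_dominated_loc_of_deriv_le (bound := fun _ ↦ C)
    (Metric.ball_mem_nhds s one_pos) (.of_forall fun x ↦ ?_) ?_ ?_
    (.of_forall fun t ht x hx ↦ ?_) intervalIntegrable_const
    (.of_forall fun t _ x _ ↦ ((hg (x + t)).comp_add_const x t).const_smul (w t))).2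
  · exact Continuous.aestronglyMeasurable (by fun_prop)
  · exact Continuous.intervalIntegrable (by fun_prop) a b
  · exact Continuous.aestronglyMeasurable (by fun_prop)
  · exact hC (x, t) ⟨Metric.ball_subset_closedBall hx, Set.uIoc_subset_uIcc ht⟩

variable [CompleteSpace G] {f : ℝ → G}

theorem hasDerivAt_integral_smul_comp_add_of_hasDerivAt_weight (hf : Continuous f)
    {w w' : ℝ → ℝ} (hw : ∀ t, HasDerivAt w (w' t) t) (hw' : Continuous w') (a b s : ℝ) :
    HasDerivAt (fun s ↦ ∫ t in a..b, w t • f (s + t))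
      (w b • f (s + b) - w a • f (s + a) - ∫ t in a..b, w' t • f (s + t)) s := by
  let g : ℝ → G := fun x ↦ ∫ y in (0 : ℝ)..x, f y
  have hg (x : ℝ) : HasDerivAt g (f x) x := hf.integral_hasStrictDerivAt 0 x |>.hasDerivAt
  have by_parts (s : ℝ) : ∫ t in a..b, w t • f (s + t) =
      w b • g (s + b) - w a • g (s + a) - ∫ t in a..b, w' t • g (s + t) :=
    integral_smul_deriv_eq_deriv_smul (fun t _ ↦ hw t)
      (fun t _ ↦ (hg (s + t)).comp_const_add s t) (hw'.intervalIntegrable a b)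
      (Continuous.intervalIntegrable (by fun_prop) a b)
  rw [funext by_parts]
  exact ((((hg (s + b)).comp_add_const s b).const_smul (w b)).sub
    (((hg (s + a)).comp_add_const s a).const_smul (w a))).sub
    (hasDerivAt_integral_smul_comp_add hg hf hw' a b s)

theorem integral_deriv_smul_comp_add_of_forall_integral_eq_zero (hf : Continuous f)
    {w w' : ℝ → ℝ} (hw : ∀ t, HasDerivAt w (w' t) t) (hw' : Continuous w') {a b : ℝ}
    (h : ∀ s, ∫ t in a..b, w t • f (s + t) = 0) (s : ℝ) :
    ∫ t in a..b, w' t • f (s + t) = w b • f (s + b) - w a • f (s + a) := by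
  have hderiv := hasDerivAt_integral_smul_comp_add_of_hasDerivAt_weight hf hw hw' a b s
  rw [funext h] at hderiv
  exact (sub_eq_zero.1 (hderiv.unique (hasDerivAt_const s 0))).symm

theorem integral_sin_pow_smul_eq_zero_of_add_two (hf : Continuous f) {k : ℕ}
    (h : ∀ s, ∫ t in (0 : ℝ)..π, sin t ^ (k + 2) • f (s + t) = 0) (s : ℝ) :
    ∫ t in (0 : ℝ)..π, sin t ^ k • f (s + t) = 0 := by
  let w' : ℝ → ℝ := fun t ↦ (k + 2) * (sin t ^ (k + 1) * cos t)
  let w'' : ℝ → ℝ := fun t ↦ (k + 2) * (k + 1) * sin t ^ k - (k + 2) ^ 2 * sin t ^ (k + 2)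
  have hw (t : ℝ) : HasDerivAt (fun t ↦ sin t ^ (k + 2)) (w' t) t :=
    ((hasDerivAt_sin t).fun_pow (k + 2)).congr_deriv (by push_cast [w']; ring_nf)
  have hw' (t : ℝ) : HasDerivAt w' (w'' t) t :=
    ((((hasDerivAt_sin t).fun_pow (k + 1)).mul (hasDerivAt_cos t)).const_mul _).congr_deriv (by
      simp only [w'', Nat.cast_add, Nat.cast_one, add_tsub_cancel_right]
      linear_combination ((k : ℝ) + 2) * (k + 1) * sin t ^ k * cos_sq' t)
  have integral_w' (s : ℝ) : ∫ t in (0 : ℝ)..π, w' t • f (s + t) = 0 := by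
    simpa using integral_deriv_smul_comp_add_of_forall_integral_eq_zero hf hw (by fun_prop) h s
  have integral_w'' : ∫ t in (0 : ℝ)..π, w'' t • f (s + t) = 0 := by
    simpa [w'] using
      integral_deriv_smul_comp_add_of_forall_integral_eq_zero hf hw' (by fun_prop) integral_w' s
  have hint (c : ℝ) (m : ℕ) :
      IntervalIntegrable (fun t ↦ c • sin t ^ m • f (s + t)) MeasureTheory.volume 0 π :=
    Continuous.intervalIntegrable (by fun_prop) 0 π
  simp only [w'', sub_smul, mul_smul _ (sin _ ^ _)] at integral_w''
  rw [integral_sub (hint _ _) (hint _ _), integral_smul, integral_smul, h, smul_zero,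
    sub_zero] at integral_w''
  exact (smul_eq_zero.1 integral_w'').resolve_left (by positivity)

theorem apply_add_pi_of_forall_integral_sin_pow_smul_eq_zero (hf : Continuous f) {k : ℕ}
    (h : ∀ s, ∫ t in (0 : ℝ)..π, sin t ^ k • f (s + t) = 0) (s : ℝ) :
    f (s + π) = (-1 : ℝ) ^ k • f s := by
  induction k using Nat.twoStepInduction with
  | zero =>
    have boundary := integral_deriv_smul_comp_add_of_forall_integral_eq_zero hf
      (fun t ↦ hasDerivAt_const t (1 : ℝ)) continuous_const (by simpa only [pow_zero] using h) s
    simpa [eq_comm, sub_eq_zero] using boundary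
  | one =>
    simp only [pow_one] at h ⊢
    have integral_cos (s : ℝ) : ∫ t in (0 : ℝ)..π, cos t • f (s + t) = 0 := by
      simpa using
        integral_deriv_smul_comp_add_of_forall_integral_eq_zero hf hasDerivAt_sin (by fun_prop) h s
    have boundary := integral_deriv_smul_comp_add_of_forall_integral_eq_zero hf
      hasDerivAt_cos (by fun_prop) integral_cos s
    simp only [neg_smul, integral_neg, h, cos_pi, cos_zero, one_smul, add_zero, neg_zero]
      at boundary ⊢
    exact neg_eq_iff_eq_neg.1 (sub_eq_zero.1 boundary.symm)
  | more k ih _ =>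
    rw [ih (integral_sin_pow_smul_eq_zero_of_add_two hf h), pow_add, neg_one_sq, mul_one]

theorem periodic_two_pi_of_forall_integral_sin_pow_smul_eq_zero (hf : Continuous f) {k : ℕ}
    (h : ∀ s, ∫ t in (0 : ℝ)..π, sin t ^ k • f (s + t) = 0) : Function.Periodic f (2 * π) := by
  intro s
  have half_turn := apply_add_pi_of_forall_integral_sin_pow_smul_eq_zero hf h
  rw [two_mul, ← add_assoc, half_turn, half_turn, smul_smul, ← mul_pow, neg_one_mul, neg_neg,
    one_pow, one_smul]

end WeightedIntegrals

theorem eq_of_periodic_of_irrational_div {X : Type*} [TopologicalSpace X] [T2Space X] {f : ℝ → X}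
    (hf : Continuous f) {a b : ℝ} (ha : Function.Periodic f a) (hb : Function.Periodic f b)
    (hab : Irrational (a / b)) (s : ℝ) : f s = f 0 := by
  have periodic_of_mem : ∀ c ∈ AddSubgroup.closure {a, b}, Function.Periodic f c := by
    intro c hc
    induction hc using AddSubgroup.closure_induction with
    | mem c hc => rcases hc with rfl | rfl <;> assumption
    | zero => exact fun x ↦ by rw [add_zero]
    | add c d _ _ hc hd => exact hc.add_period hd
    | neg c _ hc => exact hc.neg
  have hconst : f = fun _ ↦ f 0 :=
    hf.ext_on (dense_addSubgroupClosure_pair_iff.2 hab) continuous_const fun c hc ↦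
      (periodic_of_mem c hc).eq
  exact congrFun hconst s

theorem eq_zero_of_periodic_of_forall_integral_sin_pow_smul_eq_zero {G : Type*}
    [NormedAddCommGroup G] [NormedSpace ℝ G] [CompleteSpace G] {f : ℝ → G} (hf : Continuous f)
    {T : ℝ} (hT : Function.Periodic f T) (hirr : Irrational (T / (2 * π))) {k : ℕ}
    (h : ∀ s, ∫ t in (0 : ℝ)..π, sin t ^ k • f (s + t) = 0) (s : ℝ) : f s = 0 := by
  have hconst := eq_of_periodic_of_irrational_div hf hT
    (periodic_two_pi_of_forall_integral_sin_pow_smul_eq_zero hf h) hirr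
  have hzero := h 0
  simp only [hconst (0 + _), intervalIntegral.integral_smul_const] at hzero
  rw [hconst s]
  exact (smul_eq_zero.1 hzero).resolve_left (integral_sin_pow_pos k).ne'

section OrthonormalPairs

variable {E : Type*} [NormedAddCommGroup E] [InnerProductSpace ℝ E]

variable (E) in
/-- The orthonormal pairs `(u, v)` of vectors of `E`. They parametrize the great circles of a
sphere with a starting point: `u` is the direction of that point and `v` the velocity there. -/
def orthonormalPairs : Set (E × E) :=
  {p | ‖p.1‖ = 1 ∧ ‖p.2‖ = 1 ∧ ⟪p.1, p.2⟫ = 0}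

/-- Rotation of a pair of vectors by the angle `θ` in the plane they span. On orthonormal pairs
it is the geodesic flow of the unit sphere; on the sphere of radius `r` the unit-speed great
circle through `r • p.1` with velocity `p.2` is `r • (rotatePair (t / r) p).1`, with velocity
`(rotatePair (t / r) p).2`. -/
noncomputable def rotatePair (θ : ℝ) (p : E × E) : E × E :=
  (cos θ • p.1 + sin θ • p.2, (-sin θ) • p.1 + cos θ • p.2)

theorem rotatePair_zero (p : E × E) : rotatePair 0 p = p := by
  simp [rotatePair]

theorem rotatePair_add (θ ψ : ℝ) (p : E × E) :
    rotatePair (θ + ψ) p = rotatePair ψ (rotatePair θ p) := by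
  simp only [rotatePair, cos_add, sin_add, Prod.mk.injEq]
  constructor <;> module

theorem rotatePair_periodic (p : E × E) : Function.Periodic (rotatePair · p) (2 * π) := by
  intro θ
  simp only [rotatePair, cos_add_two_pi, sin_add_two_pi]

theorem continuous_rotatePair (p : E × E) : Continuous (rotatePair · p) := by
  unfold rotatePair
  fun_prop

theorem inner_smul_add_smul_of_mem_orthonormalPairs {p : E × E} (hp : p ∈ orthonormalPairs E)
    (a b c d : ℝ) : ⟪a • p.1 + b • p.2, c • p.1 + d • p.2⟫ = a * c + b * d := by
  obtain ⟨h₁, h₂, h₁₂⟩ := hp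
  simp only [inner_add_left, inner_add_right, real_inner_smul_left, real_inner_smul_right,
    real_inner_self_eq_norm_sq, real_inner_comm p.1 p.2, h₁, h₂, h₁₂]
  ring

theorem rotatePair_mem_orthonormalPairs {p : E × E} (hp : p ∈ orthonormalPairs E) (θ : ℝ) :
    rotatePair θ p ∈ orthonormalPairs E := by
  have norm_eq_one {x : E} (hx : ⟪x, x⟫ = 1) : ‖x‖ = 1 := by
    rw [norm_eq_sqrt_real_inner, hx, sqrt_one]
  refine ⟨norm_eq_one ?_, norm_eq_one ?_, ?_⟩ <;>
    rw [rotatePair, inner_smul_add_smul_of_mem_orthonormalPairs hp]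
  · linear_combination cos_sq_add_sin_sq θ
  · linear_combination sin_sq_add_cos_sq θ
  · ring

theorem eq_zero_on_orthonormalPairs_of_integral_rotatePair_eq_zero {G : Type*}
    [NormedAddCommGroup G] [NormedSpace ℝ G] [CompleteSpace G] {φ : E × E → G}
    (hφ : ContinuousOn φ (orthonormalPairs E)) {r : ℝ} (hr : Irrational r) {k : ℕ}
    (h : ∀ p ∈ orthonormalPairs E, ∫ t in (0 : ℝ)..π, sin t ^ k • φ (rotatePair (t / r) p) = 0)
    {p : E × E} (hp : p ∈ orthonormalPairs E) : φ p = 0 := by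
  let f : ℝ → G := fun t ↦ φ (rotatePair (t / r) p)
  have hf : Continuous f := hφ.comp_continuous
    ((continuous_rotatePair p).comp (continuous_id.div_const r))
    fun t ↦ rotatePair_mem_orthonormalPairs hp (t / r)
  have hperiodic : Function.Periodic f (2 * π * r) :=
    ((rotatePair_periodic p).comp φ).div_const r
  have hperiods : Irrational (2 * π * r / (2 * π)) := by
    rwa [mul_div_cancel_left₀ r two_pi_pos.ne']
  have hintegral (s : ℝ) : ∫ t in (0 : ℝ)..π, sin t ^ k • f (s + t) = 0 := by
    simpa only [f, add_div, rotatePair_add] using h _ (rotatePair_mem_orthonormalPairs hp (s / r))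
  simpa [f, rotatePair_zero] using
    eq_zero_of_periodic_of_forall_integral_sin_pow_smul_eq_zero hf hperiodic hperiods hintegral 0

theorem tensor_vanishes_on_sphere_of_irrational_radius_general {k : ℕ} {r : ℝ}
    (hirr : Irrational r) {F : E → (E →L[ℝ] E →L[ℝ] ℝ)}
    (hF : ContinuousOn F (Metric.sphere 0 r))
    (h : ∀ u v : E, ‖u‖ = 1 → ‖v‖ = 1 → ⟪u, v⟫ = 0 →
      ∫ t in (0:ℝ)..π,
        F ((r * Real.cos (t / r)) • u + (r * Real.sin (t / r)) • v)
          ((-Real.sin (t / r)) • u + Real.cos (t / r) • v)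
          ((-Real.sin (t / r)) • u + Real.cos (t / r) • v)
          * Real.sin t ^ k = 0)
    (x V : E) (hx : ‖x‖ = r) (hxV : ⟪x, V⟫ = 0) : F x V V = 0 := by
  subst hx
  obtain rfl | hV := eq_or_ne V 0
  · simp
  have hx : x ≠ 0 := norm_ne_zero_iff.1 hirr.ne_zero
  let φ : E × E → ℝ := fun p ↦ F (‖x‖ • p.1) p.2 p.2
  have hφ : ContinuousOn φ (orthonormalPairs E) := by
    have hF' : ContinuousOn (fun p : E × E ↦ F (‖x‖ • p.1)) (orthonormalPairs E) :=
      hF.comp (by fun_prop) fun p hp ↦ by simp [norm_smul, hp.1]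
    exact (hF'.clm_apply continuousOn_snd).clm_apply continuousOn_snd
  have hp : (‖x‖⁻¹ • x, ‖V‖⁻¹ • V) ∈ orthonormalPairs E :=
    ⟨norm_smul_inv_norm hx, norm_smul_inv_norm hV, by
      simp [real_inner_smul_left, real_inner_smul_right, hxV]⟩
  have hvanish := eq_zero_on_orthonormalPairs_of_integral_rotatePair_eq_zero hφ hirr (k := k)
    (fun q hq ↦ by
      simpa only [φ, rotatePair, smul_add, smul_smul, smul_eq_mul, mul_comm (sin _ ^ k)] using
        h q.1 q.2 hq.1 hq.2.1 hq.2.2) hp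
  simpa [φ, smul_inv_smul₀ hirr.ne_zero, hV] using hvanish

end OrthonormalPairs

/-- The case of Proposition 3.1 where the boundary is a sphere of irrational
radius `r`: if the `(sin t)^k`-weighted X-ray transform of a smooth symmetric
2-cotensor field along the unit-speed great circles of the sphere of radius `r`
vanishes, then the tensor vanishes on tangent vectors to that sphere. -/
theorem tensor_vanishes_on_sphere_of_irrational_radius
    (n : ℕ) (hn : 2 ≤ n) (k : ℕ) (r : ℝ) (hr : 0 < r) (hirr : Irrational r)
    (F : EuclideanSpace ℝ (Fin n) →
      (EuclideanSpace ℝ (Fin n) →L[ℝ] EuclideanSpace ℝ (Fin n) →L[ℝ] ℝ))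
    (hF : ContDiff ℝ (⊤ : ℕ∞) F)
    (hsymm : ∀ x V W, F x V W = F x W V)
    (h : ∀ u v : EuclideanSpace ℝ (Fin n), ‖u‖ = 1 → ‖v‖ = 1 → ⟪u, v⟫ = 0 →
      ∫ t in (0:ℝ)..π,
        F ((r * Real.cos (t / r)) • u + (r * Real.sin (t / r)) • v)
          ((-Real.sin (t / r)) • u + Real.cos (t / r) • v)
          ((-Real.sin (t / r)) • u + Real.cos (t / r) • v)
          * Real.sin t ^ k = 0) :
    ∀ x V : EuclideanSpace ℝ (Fin n), ‖x‖ = r → ⟪x, V⟫ = 0 → F x V V = 0 := by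
  exact tensor_vanishes_on_sphere_of_irrational_radius_general hirr hF.continuous.continuousOn h
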